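/- In the Monge chart, assume the origin is a normal singularity, i.e., r₁ + t₁ = 0 and r₂ + t₂ = 0. Then the coefficient C := E f_H − F e_H of du² in the differential equation of principal mean curvature lines satisfies C(0,0) = 0, ∂C/∂u(0,0) = [s₁(a₁ + b₁) + s₂(a₂ + b₂)]/2 and ∂C/∂v(0,0) = [s₁(c₁ + d₁) + s₂(c₂ + d₂)]/2. -/

import Mathlib

/-!
Write `ω_N = E ⟪α_uv, N⟫ - F ⟪α_uu, N⟫`. Expanding `H = H₁N₁ + H₂N₂` gives
`C = H₁ ω_{N₁} + H₂ ω_{N₂}`. At the origin `E = G = 1`, `F = 0`, all three have zero differential,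
and `N₁, N₂` are the last two standard basis vectors `ε₃, ε₄`. A normal singularity forces
`H₁ = H₂ = 0` there, so `C` vanishes and `dC = s₁ dH₁ + s₂ dH₂`.

Moreover `H_N = (G ⟪α_uu, N⟫ - 2F ⟪α_uv, N⟫ + E ⟪α_vv, N⟫) / (2(EG - F²))` has numerator
`X₁ N⁽³⁾ + X₂ N⁽⁴⁾` with `X_k = G ∂_u²h_k - 2F ∂_u∂_v h_k + E ∂_v²h_k`. As `X_k(0,0) = r_k + t_k = 0`,
the derivative of `N` does not contribute, and `dX_k = d(∂_u²h_k) + d(∂_v²h_k)`; hence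
`dH_k = (d(∂_u²h_k) + d(∂_v²h_k)) / 2` (`hasFDerivAt_meanAlong`). Symmetry of second derivatives
identifies `∂_u∂_v²h` with `∂_v²∂_u h`.
-/

noncomputable section

open scoped RealInnerProductSpace

abbrev E4 : Type := EuclideanSpace ℝ (Fin 4)

/-- Partial derivative with respect to the first variable `u`. -/
def pdu {X : Type*} [NormedAddCommGroup X] [NormedSpace ℝ X]
    (f : ℝ × ℝ → X) (p : ℝ × ℝ) : X := fderiv ℝ f p (1, 0)

/-- Partial derivative with respect to the second variable `v`. -/
def pdv {X : Type*} [NormedAddCommGroup X] [NormedSpace ℝ X]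
    (f : ℝ × ℝ → X) (p : ℝ × ℝ) : X := fderiv ℝ f p (0, 1)

/-- The wedge `x ∧ y ∧ z` of three vectors of `ℝ⁴`: the unique vector satisfying
`⟪x ∧ y ∧ z, w⟫ = det (x, y, z, w)` for all `w ∈ ℝ⁴`. -/
def wedge (x y z : E4) : E4 :=
  (WithLp.equiv 2 (Fin 4 → ℝ)).symm fun i =>
    Matrix.det (Matrix.of ![(x : Fin 4 → ℝ), y, z, fun j => if j = i then 1 else 0])

namespace Monge

/-- The immersion `α (u,v) = (u, v, h₁(u,v), h₂(u,v))` in the Monge chart. -/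
def α (h₁ h₂ : ℝ × ℝ → ℝ) (p : ℝ × ℝ) : E4 :=
  (WithLp.equiv 2 (Fin 4 → ℝ)).symm ![p.1, p.2, h₁ p, h₂ p]

def αu (h₁ h₂ : ℝ × ℝ → ℝ) : ℝ × ℝ → E4 := pdu (α h₁ h₂)
def αv (h₁ h₂ : ℝ × ℝ → ℝ) : ℝ × ℝ → E4 := pdv (α h₁ h₂)
def αuu (h₁ h₂ : ℝ × ℝ → ℝ) : ℝ × ℝ → E4 := pdu (αu h₁ h₂)
def αuv (h₁ h₂ : ℝ × ℝ → ℝ) : ℝ × ℝ → E4 := pdv (αu h₁ h₂)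
def αvv (h₁ h₂ : ℝ × ℝ → ℝ) : ℝ × ℝ → E4 := pdv (αv h₁ h₂)

/-- `B₁ = (−∂h₁/∂u, −∂h₁/∂v, 1, 0)`. -/
def B1 (h₁ : ℝ × ℝ → ℝ) (p : ℝ × ℝ) : E4 :=
  (WithLp.equiv 2 (Fin 4 → ℝ)).symm ![-(pdu h₁ p), -(pdv h₁ p), 1, 0]

/-- `B₂ = α_u ∧ α_v ∧ B₁`. -/
def B2 (h₁ h₂ : ℝ × ℝ → ℝ) (p : ℝ × ℝ) : E4 :=
  wedge (αu h₁ h₂ p) (αv h₁ h₂ p) (B1 h₁ p)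

/-- `N₁ = B₁/|B₁|`. -/
def N1 (h₁ : ℝ × ℝ → ℝ) (p : ℝ × ℝ) : E4 := ‖B1 h₁ p‖⁻¹ • B1 h₁ p

/-- `N₂ = B₂/|B₂|`. -/
def N2 (h₁ h₂ : ℝ × ℝ → ℝ) (p : ℝ × ℝ) : E4 := ‖B2 h₁ h₂ p‖⁻¹ • B2 h₁ h₂ p

/-- Coefficient `E` of the first fundamental form. -/
def Ec (h₁ h₂ : ℝ × ℝ → ℝ) (p : ℝ × ℝ) : ℝ := ⟪αu h₁ h₂ p, αu h₁ h₂ p⟫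
/-- Coefficient `F` of the first fundamental form. -/
def Fc (h₁ h₂ : ℝ × ℝ → ℝ) (p : ℝ × ℝ) : ℝ := ⟪αu h₁ h₂ p, αv h₁ h₂ p⟫
/-- Coefficient `G` of the first fundamental form. -/
def Gc (h₁ h₂ : ℝ × ℝ → ℝ) (p : ℝ × ℝ) : ℝ := ⟪αv h₁ h₂ p, αv h₁ h₂ p⟫

def e1 (h₁ h₂ : ℝ × ℝ → ℝ) (p : ℝ × ℝ) : ℝ := ⟪αuu h₁ h₂ p, N1 h₁ p⟫
def f1 (h₁ h₂ : ℝ × ℝ → ℝ) (p : ℝ × ℝ) : ℝ := ⟪αuv h₁ h₂ p, N1 h₁ p⟫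
def g1 (h₁ h₂ : ℝ × ℝ → ℝ) (p : ℝ × ℝ) : ℝ := ⟪αvv h₁ h₂ p, N1 h₁ p⟫
def e2 (h₁ h₂ : ℝ × ℝ → ℝ) (p : ℝ × ℝ) : ℝ := ⟪αuu h₁ h₂ p, N2 h₁ h₂ p⟫
def f2 (h₁ h₂ : ℝ × ℝ → ℝ) (p : ℝ × ℝ) : ℝ := ⟪αuv h₁ h₂ p, N2 h₁ h₂ p⟫
def g2 (h₁ h₂ : ℝ × ℝ → ℝ) (p : ℝ × ℝ) : ℝ := ⟪αvv h₁ h₂ p, N2 h₁ h₂ p⟫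

/-- First component `H₁ = (G e₁ − 2F f₁ + E g₁)/(2(EG − F²))` of the mean curvature vector. -/
def Hc1 (h₁ h₂ : ℝ × ℝ → ℝ) (p : ℝ × ℝ) : ℝ :=
  (Gc h₁ h₂ p * e1 h₁ h₂ p - 2 * Fc h₁ h₂ p * f1 h₁ h₂ p + Ec h₁ h₂ p * g1 h₁ h₂ p) /
    (2 * (Ec h₁ h₂ p * Gc h₁ h₂ p - Fc h₁ h₂ p ^ 2))

/-- Second component `H₂ = (G e₂ − 2F f₂ + E g₂)/(2(EG − F²))` of the mean curvature vector. -/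
def Hc2 (h₁ h₂ : ℝ × ℝ → ℝ) (p : ℝ × ℝ) : ℝ :=
  (Gc h₁ h₂ p * e2 h₁ h₂ p - 2 * Fc h₁ h₂ p * f2 h₁ h₂ p + Ec h₁ h₂ p * g2 h₁ h₂ p) /
    (2 * (Ec h₁ h₂ p * Gc h₁ h₂ p - Fc h₁ h₂ p ^ 2))

/-- The mean curvature vector `H = H₁N₁ + H₂N₂`. -/
def Hvec (h₁ h₂ : ℝ × ℝ → ℝ) (p : ℝ × ℝ) : E4 :=
  Hc1 h₁ h₂ p • N1 h₁ p + Hc2 h₁ h₂ p • N2 h₁ h₂ p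

def eH (h₁ h₂ : ℝ × ℝ → ℝ) (p : ℝ × ℝ) : ℝ := ⟪αuu h₁ h₂ p, Hvec h₁ h₂ p⟫
def fH (h₁ h₂ : ℝ × ℝ → ℝ) (p : ℝ × ℝ) : ℝ := ⟪αuv h₁ h₂ p, Hvec h₁ h₂ p⟫
def gH (h₁ h₂ : ℝ × ℝ → ℝ) (p : ℝ × ℝ) : ℝ := ⟪αvv h₁ h₂ p, Hvec h₁ h₂ p⟫

end Monge

/-- `r = ∂²h/∂u²(0,0)`. -/
def rr (h : ℝ × ℝ → ℝ) : ℝ := pdu (pdu h) (0, 0)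
/-- `s = ∂²h/∂u∂v(0,0)`. -/
def ss (h : ℝ × ℝ → ℝ) : ℝ := pdv (pdu h) (0, 0)
/-- `t = ∂²h/∂v²(0,0)`. -/
def tt (h : ℝ × ℝ → ℝ) : ℝ := pdv (pdv h) (0, 0)
/-- `a = ∂³h/∂u³(0,0)`. -/
def aa (h : ℝ × ℝ → ℝ) : ℝ := pdu (pdu (pdu h)) (0, 0)
/-- `d = ∂³h/∂u²∂v(0,0)`. -/
def dd (h : ℝ × ℝ → ℝ) : ℝ := pdv (pdu (pdu h)) (0, 0)
/-- `b = ∂³h/∂u∂v²(0,0)`. -/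
def bb (h : ℝ × ℝ → ℝ) : ℝ := pdv (pdv (pdu h)) (0, 0)
/-- `c = ∂³h/∂v³(0,0)`. -/
def cc (h : ℝ × ℝ → ℝ) : ℝ := pdv (pdv (pdv h)) (0, 0)

open Monge

/-! ### Smoothness and symmetry of partial derivatives -/

lemma contDiff_pdu {h : ℝ × ℝ → ℝ} (hh : ContDiff ℝ (⊤ : ℕ∞) h) :
    ContDiff ℝ (⊤ : ℕ∞) (pdu h) := by
  unfold pdu
  exact (hh.fderiv_right (m := (⊤ : ℕ∞)) (by simp)).clm_apply contDiff_const

lemma contDiff_pdv {h : ℝ × ℝ → ℝ} (hh : ContDiff ℝ (⊤ : ℕ∞) h) :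
    ContDiff ℝ (⊤ : ℕ∞) (pdv h) := by
  unfold pdv
  exact (hh.fderiv_right (m := (⊤ : ℕ∞)) (by simp)).clm_apply contDiff_const

lemma differentiable_of_smooth {h : ℝ × ℝ → ℝ} (hh : ContDiff ℝ (⊤ : ℕ∞) h) :
    Differentiable ℝ h := hh.differentiable (by simp)

lemma pdu_pdv {h : ℝ × ℝ → ℝ} (hh : ContDiff ℝ (⊤ : ℕ∞) h) : pdu (pdv h) = pdv (pdu h) := by
  funext p
  have hd : DifferentiableAt ℝ (fderiv ℝ h) p :=
    ((hh.fderiv_right (m := (⊤ : ℕ∞)) (by simp)).differentiable (by simp)) p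
  have hsymm : IsSymmSndFDerivAt ℝ h p := hh.contDiffAt.isSymmSndFDerivAt (by
    rw [minSmoothness_of_isRCLikeNormedField]
    exact WithTop.coe_le_coe.2 (le_top : (2 : ℕ∞) ≤ ⊤))
  have key (v w : ℝ × ℝ) :
      fderiv ℝ (fun q => fderiv ℝ h q v) p w = fderiv ℝ (fderiv ℝ h) p w v := by
    rw [fderiv_clm_apply hd (differentiableAt_const v)]
    simp
  change fderiv ℝ (fun q => fderiv ℝ h q (0, 1)) p (1, 0) =
    fderiv ℝ (fun q => fderiv ℝ h q (1, 0)) p (0, 1)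
  rw [key, key]
  exact hsymm.eq _ _

/-- Directional derivatives of maps into `ℝ⁴` are computed coordinatewise. -/
lemma fderiv_vec {a b c d : ℝ × ℝ → ℝ} (ha : Differentiable ℝ a) (hb : Differentiable ℝ b)
    (hc : Differentiable ℝ c) (hd : Differentiable ℝ d) (p w : ℝ × ℝ) :
    fderiv ℝ (fun q => (!₂[a q, b q, c q, d q] : E4)) p w =
      !₂[fderiv ℝ a p w, fderiv ℝ b p w, fderiv ℝ c p w, fderiv ℝ d p w] := by
  have hf : DifferentiableAt ℝ (fun q => (!₂[a q, b q, c q, d q] : E4)) p := by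
    rw [differentiableAt_euclidean]
    intro i
    fin_cases i
    exacts [ha p, hb p, hc p, hd p]
  ext i
  have := ((EuclideanSpace.proj (𝕜 := ℝ) i).hasFDerivAt.comp p hf.hasFDerivAt).fderiv
  have := congrArg (fun L => L w) this
  fin_cases i <;> exact this.symm

/-! ### Derivatives of the immersion and the normal frame -/

lemma αu_eq {h₁ h₂ : ℝ × ℝ → ℝ} (k₁ : ContDiff ℝ (⊤ : ℕ∞) h₁)
    (k₂ : ContDiff ℝ (⊤ : ℕ∞) h₂) : αu h₁ h₂ = fun p => !₂[1, 0, pdu h₁ p, pdu h₂ p] := by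
  funext p
  refine (fderiv_vec differentiable_fst differentiable_snd (differentiable_of_smooth k₁)
    (differentiable_of_smooth k₂) p (1, 0)).trans ?_
  simp [pdu, fderiv_fst, fderiv_snd]

lemma αv_eq {h₁ h₂ : ℝ × ℝ → ℝ} (k₁ : ContDiff ℝ (⊤ : ℕ∞) h₁)
    (k₂ : ContDiff ℝ (⊤ : ℕ∞) h₂) : αv h₁ h₂ = fun p => !₂[0, 1, pdv h₁ p, pdv h₂ p] := by
  funext p
  refine (fderiv_vec differentiable_fst differentiable_snd (differentiable_of_smooth k₁)
    (differentiable_of_smooth k₂) p (0, 1)).trans ?_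
  simp [pdv, fderiv_fst, fderiv_snd]

lemma αuu_eq {h₁ h₂ : ℝ × ℝ → ℝ} (k₁ : ContDiff ℝ (⊤ : ℕ∞) h₁)
    (k₂ : ContDiff ℝ (⊤ : ℕ∞) h₂) :
    αuu h₁ h₂ = fun p => !₂[0, 0, pdu (pdu h₁) p, pdu (pdu h₂) p] := by
  funext p
  rw [αuu, αu_eq k₁ k₂]
  refine (fderiv_vec (differentiable_const _) (differentiable_const _)
    (differentiable_of_smooth (contDiff_pdu k₁))
    (differentiable_of_smooth (contDiff_pdu k₂)) p (1, 0)).trans ?_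
  simp [pdu]

lemma αuv_eq {h₁ h₂ : ℝ × ℝ → ℝ} (k₁ : ContDiff ℝ (⊤ : ℕ∞) h₁)
    (k₂ : ContDiff ℝ (⊤ : ℕ∞) h₂) :
    αuv h₁ h₂ = fun p => !₂[0, 0, pdv (pdu h₁) p, pdv (pdu h₂) p] := by
  funext p
  rw [αuv, αu_eq k₁ k₂]
  refine (fderiv_vec (differentiable_const _) (differentiable_const _)
    (differentiable_of_smooth (contDiff_pdu k₁))
    (differentiable_of_smooth (contDiff_pdu k₂)) p (0, 1)).trans ?_
  simp [pdv]

lemma αvv_eq {h₁ h₂ : ℝ × ℝ → ℝ} (k₁ : ContDiff ℝ (⊤ : ℕ∞) h₁)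
    (k₂ : ContDiff ℝ (⊤ : ℕ∞) h₂) :
    αvv h₁ h₂ = fun p => !₂[0, 0, pdv (pdv h₁) p, pdv (pdv h₂) p] := by
  funext p
  rw [αvv, αv_eq k₁ k₂]
  refine (fderiv_vec (differentiable_const _) (differentiable_const _)
    (differentiable_of_smooth (contDiff_pdv k₁))
    (differentiable_of_smooth (contDiff_pdv k₂)) p (0, 1)).trans ?_
  simp [pdv]

lemma differentiable_B1 {h₁ : ℝ × ℝ → ℝ} (k₁ : ContDiff ℝ (⊤ : ℕ∞) h₁) :
    Differentiable ℝ (B1 h₁) := by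
  rw [differentiable_euclidean]
  intro i
  fin_cases i
  exacts [(differentiable_of_smooth (contDiff_pdu k₁)).neg,
    (differentiable_of_smooth (contDiff_pdv k₁)).neg, differentiable_const _,
    differentiable_const _]

lemma differentiable_wedge {x y z : ℝ × ℝ → E4} (hx : Differentiable ℝ x)
    (hy : Differentiable ℝ y) (hz : Differentiable ℝ z) :
    Differentiable ℝ (fun p => wedge (x p) (y p) (z p)) := by
  rw [differentiable_euclidean] at hx hy hz ⊢
  intro i
  simp only [wedge, WithLp.equiv_symm_apply, Matrix.det_apply]
  refine Differentiable.fun_sum fun σ _ => Differentiable.const_smul ?_ _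
  have entry (j k : Fin 4) : Differentiable ℝ fun p => (Matrix.of
      ![(x p : Fin 4 → ℝ), y p, z p, fun l => if l = i then 1 else 0]) k j := by
    fin_cases k
    exacts [hx j, hy j, hz j, differentiable_const _]
  simp only [Fin.prod_univ_four]
  exact (((entry _ _).fun_mul (entry _ _)).fun_mul (entry _ _)).fun_mul (entry _ _)

lemma differentiable_B2 {h₁ h₂ : ℝ × ℝ → ℝ} (k₁ : ContDiff ℝ (⊤ : ℕ∞) h₁)
    (k₂ : ContDiff ℝ (⊤ : ℕ∞) h₂) : Differentiable ℝ (B2 h₁ h₂) := by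
  refine differentiable_wedge ?_ ?_ (differentiable_B1 k₁)
  · rw [αu_eq k₁ k₂, differentiable_euclidean]
    intro i
    fin_cases i
    exacts [differentiable_const _, differentiable_const _,
      differentiable_of_smooth (contDiff_pdu k₁), differentiable_of_smooth (contDiff_pdu k₂)]
  · rw [αv_eq k₁ k₂, differentiable_euclidean]
    intro i
    fin_cases i
    exacts [differentiable_const _, differentiable_const _,
      differentiable_of_smooth (contDiff_pdv k₁), differentiable_of_smooth (contDiff_pdv k₂)]

lemma B1_origin {h₁ : ℝ × ℝ → ℝ} (g₁ : fderiv ℝ h₁ (0, 0) = 0) :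
    B1 h₁ (0, 0) = !₂[0, 0, 1, 0] := by
  simp [B1, pdu, pdv, g₁]

lemma B2_origin {h₁ h₂ : ℝ × ℝ → ℝ} (k₁ : ContDiff ℝ (⊤ : ℕ∞) h₁)
    (k₂ : ContDiff ℝ (⊤ : ℕ∞) h₂)
    (g₁ : fderiv ℝ h₁ (0, 0) = 0) (g₂ : fderiv ℝ h₂ (0, 0) = 0) :
    B2 h₁ h₂ (0, 0) = !₂[0, 0, 0, 1] := by
  rw [B2, B1_origin g₁, αu_eq k₁ k₂, αv_eq k₁ k₂]
  ext i
  fin_cases i <;>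
    simp [wedge, pdu, pdv, g₁, g₂, Matrix.det_succ_row_zero, Fin.sum_univ_succ, Fin.succAbove]

lemma N1_origin {h₁ : ℝ × ℝ → ℝ} (g₁ : fderiv ℝ h₁ (0, 0) = 0) :
    N1 h₁ (0, 0) = !₂[0, 0, 1, 0] := by
  rw [N1, B1_origin g₁]
  simp [EuclideanSpace.norm_eq, Fin.sum_univ_four]

lemma N2_origin {h₁ h₂ : ℝ × ℝ → ℝ} (k₁ : ContDiff ℝ (⊤ : ℕ∞) h₁)
    (k₂ : ContDiff ℝ (⊤ : ℕ∞) h₂)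
    (g₁ : fderiv ℝ h₁ (0, 0) = 0) (g₂ : fderiv ℝ h₂ (0, 0) = 0) :
    N2 h₁ h₂ (0, 0) = !₂[0, 0, 0, 1] := by
  rw [N2, B2_origin k₁ k₂ g₁ g₂]
  simp [EuclideanSpace.norm_eq, Fin.sum_univ_four]

lemma differentiableAt_normalize {B : ℝ × ℝ → E4} {p : ℝ × ℝ} (hB : DifferentiableAt ℝ B p)
    (h0 : B p ≠ 0) : DifferentiableAt ℝ (fun q => ‖B q‖⁻¹ • B q) p :=
  ((hB.norm ℝ h0).fun_inv (norm_ne_zero_iff.mpr h0)).fun_smul hB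

lemma differentiableAt_N1 {h₁ : ℝ × ℝ → ℝ} (k₁ : ContDiff ℝ (⊤ : ℕ∞) h₁)
    (g₁ : fderiv ℝ h₁ (0, 0) = 0) : DifferentiableAt ℝ (N1 h₁) (0, 0) := by
  refine differentiableAt_normalize (differentiable_B1 k₁ _) fun h => ?_
  rw [B1_origin g₁] at h
  simpa using congrArg (fun x : E4 => x 2) h

lemma differentiableAt_N2 {h₁ h₂ : ℝ × ℝ → ℝ} (k₁ : ContDiff ℝ (⊤ : ℕ∞) h₁)
    (k₂ : ContDiff ℝ (⊤ : ℕ∞) h₂)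
    (g₁ : fderiv ℝ h₁ (0, 0) = 0) (g₂ : fderiv ℝ h₂ (0, 0) = 0) :
    DifferentiableAt ℝ (N2 h₁ h₂) (0, 0) := by
  refine differentiableAt_normalize (differentiable_B2 k₁ k₂ _) fun h => ?_
  rw [B2_origin k₁ k₂ g₁ g₂] at h
  simpa using congrArg (fun x : E4 => x 3) h

/-! ### The first fundamental form at the origin -/

lemma Ec_eq {h₁ h₂ : ℝ × ℝ → ℝ} (k₁ : ContDiff ℝ (⊤ : ℕ∞) h₁)
    (k₂ : ContDiff ℝ (⊤ : ℕ∞) h₂) :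
    Ec h₁ h₂ = fun p => 1 + pdu h₁ p * pdu h₁ p + pdu h₂ p * pdu h₂ p := by
  funext p
  -- The self inner product is to be expanded in coordinates, not folded into a squared norm.
  simp [Ec, -inner_self_eq_norm_sq_to_K, αu_eq k₁ k₂, PiLp.inner_apply, Fin.sum_univ_four]

lemma Fc_eq {h₁ h₂ : ℝ × ℝ → ℝ} (k₁ : ContDiff ℝ (⊤ : ℕ∞) h₁)
    (k₂ : ContDiff ℝ (⊤ : ℕ∞) h₂) :
    Fc h₁ h₂ = fun p => 0 + pdu h₁ p * pdv h₁ p + pdu h₂ p * pdv h₂ p := by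
  funext p
  simp [Fc, αu_eq k₁ k₂, αv_eq k₁ k₂, PiLp.inner_apply, Fin.sum_univ_four, mul_comm]

lemma Gc_eq {h₁ h₂ : ℝ × ℝ → ℝ} (k₁ : ContDiff ℝ (⊤ : ℕ∞) h₁)
    (k₂ : ContDiff ℝ (⊤ : ℕ∞) h₂) :
    Gc h₁ h₂ = fun p => 1 + pdv h₁ p * pdv h₁ p + pdv h₂ p * pdv h₂ p := by
  funext p
  simp [Gc, -inner_self_eq_norm_sq_to_K, αv_eq k₁ k₂, PiLp.inner_apply, Fin.sum_univ_four]

/-- Each coefficient of the first fundamental form is a constant plus products of first partial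
derivatives of `h₁, h₂`, which vanish at the origin; so its differential vanishes there. -/
lemma hasFDerivAt_firstForm {x y z w : ℝ × ℝ → ℝ} {p : ℝ × ℝ} (c : ℝ)
    (dx : DifferentiableAt ℝ x p) (dy : DifferentiableAt ℝ y p)
    (dz : DifferentiableAt ℝ z p) (dw : DifferentiableAt ℝ w p)
    (hx : x p = 0) (hy : y p = 0) (hz : z p = 0) (hw : w p = 0) :
    HasFDerivAt (fun q => c + x q * y q + z q * w q) (0 : ℝ × ℝ →L[ℝ] ℝ) p := by
  have := ((dx.hasFDerivAt.mul dy.hasFDerivAt).const_add c).add (dz.hasFDerivAt.mul dw.hasFDerivAt)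
  simpa [hx, hy, hz, hw, add_assoc, Pi.add_def, Pi.mul_def] using this

/-- At a zero of `f`, the product rule for `f * g` does not involve the derivative of `g`. -/
lemma hasFDerivAt_mul_of_zero {f g : ℝ × ℝ → ℝ} {p : ℝ × ℝ} {f' : ℝ × ℝ →L[ℝ] ℝ}
    (hf : HasFDerivAt f f' p) (hg : DifferentiableAt ℝ g p) (h0 : f p = 0) :
    HasFDerivAt (fun q => f q * g q) (g p • f') p := by
  simpa [h0] using hf.fun_mul hg.hasFDerivAt

/-! ### Mean curvature components at a normal singularity -/

/-- The component of the mean curvature along a field `N`: `H₁` and `H₂` are the cases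
`N = N₁` and `N = N₂`. -/
def meanAlong (h₁ h₂ : ℝ × ℝ → ℝ) (N : ℝ × ℝ → E4) (p : ℝ × ℝ) : ℝ :=
  (Gc h₁ h₂ p * ⟪αuu h₁ h₂ p, N p⟫ - 2 * Fc h₁ h₂ p * ⟪αuv h₁ h₂ p, N p⟫ +
    Ec h₁ h₂ p * ⟪αvv h₁ h₂ p, N p⟫) /
    (2 * (Ec h₁ h₂ p * Gc h₁ h₂ p - Fc h₁ h₂ p ^ 2))

/-- `G ∂_u²h - 2F ∂_u∂_v h + E ∂_v²h`, where `E, F, G` belong to the chart of `h₁, h₂`. -/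
def traceHess (h₁ h₂ h : ℝ × ℝ → ℝ) (p : ℝ × ℝ) : ℝ :=
  Gc h₁ h₂ p * pdu (pdu h) p - 2 * Fc h₁ h₂ p * pdv (pdu h) p + Ec h₁ h₂ p * pdv (pdv h) p

/-- The differential of `∂_u²h + ∂_v²h` at the origin. -/
def dLap (h : ℝ × ℝ → ℝ) : ℝ × ℝ →L[ℝ] ℝ :=
  fderiv ℝ (pdu (pdu h)) (0, 0) + fderiv ℝ (pdv (pdv h)) (0, 0)

lemma meanAlong_eq {h₁ h₂ : ℝ × ℝ → ℝ} (k₁ : ContDiff ℝ (⊤ : ℕ∞) h₁)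
    (k₂ : ContDiff ℝ (⊤ : ℕ∞) h₂) (N : ℝ × ℝ → E4) :
    meanAlong h₁ h₂ N = fun p =>
      (traceHess h₁ h₂ h₁ p * N p 2 + traceHess h₁ h₂ h₂ p * N p 3) *
        (2 * (Ec h₁ h₂ p * Gc h₁ h₂ p - Fc h₁ h₂ p ^ 2))⁻¹ := by
  funext p
  rw [meanAlong, div_eq_mul_inv]
  congr 1
  simp [traceHess, αuu_eq k₁ k₂, αuv_eq k₁ k₂, αvv_eq k₁ k₂, PiLp.inner_apply, Fin.sum_univ_four]
  ring

/-- First-order data of the first fundamental form at the origin. -/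
lemma firstForm_origin {h₁ h₂ : ℝ × ℝ → ℝ} (k₁ : ContDiff ℝ (⊤ : ℕ∞) h₁)
    (k₂ : ContDiff ℝ (⊤ : ℕ∞) h₂)
    (g₁ : fderiv ℝ h₁ (0, 0) = 0) (g₂ : fderiv ℝ h₂ (0, 0) = 0) :
    (Ec h₁ h₂ (0, 0) = 1 ∧ Fc h₁ h₂ (0, 0) = 0 ∧ Gc h₁ h₂ (0, 0) = 1) ∧
    HasFDerivAt (Ec h₁ h₂) (0 : ℝ × ℝ →L[ℝ] ℝ) (0, 0) ∧
    HasFDerivAt (Fc h₁ h₂) (0 : ℝ × ℝ →L[ℝ] ℝ) (0, 0) ∧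
    HasFDerivAt (Gc h₁ h₂) (0 : ℝ × ℝ →L[ℝ] ℝ) (0, 0) := by
  have u₁ : pdu h₁ (0, 0) = 0 := by simp [pdu, g₁]
  have u₂ : pdu h₂ (0, 0) = 0 := by simp [pdu, g₂]
  have v₁ : pdv h₁ (0, 0) = 0 := by simp [pdv, g₁]
  have v₂ : pdv h₂ (0, 0) = 0 := by simp [pdv, g₂]
  have du₁ := differentiable_of_smooth (contDiff_pdu k₁) (0, 0)
  have du₂ := differentiable_of_smooth (contDiff_pdu k₂) (0, 0)
  have dv₁ := differentiable_of_smooth (contDiff_pdv k₁) (0, 0)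
  have dv₂ := differentiable_of_smooth (contDiff_pdv k₂) (0, 0)
  rw [Ec_eq k₁ k₂, Fc_eq k₁ k₂, Gc_eq k₁ k₂]
  exact ⟨by simp [u₁, u₂, v₁, v₂],
    hasFDerivAt_firstForm 1 du₁ du₁ du₂ du₂ u₁ u₁ u₂ u₂,
    hasFDerivAt_firstForm 0 du₁ dv₁ du₂ dv₂ u₁ v₁ u₂ v₂,
    hasFDerivAt_firstForm 1 dv₁ dv₁ dv₂ dv₂ v₁ v₁ v₂ v₂⟩

lemma traceHess_origin {h₁ h₂ : ℝ × ℝ → ℝ} (k₁ : ContDiff ℝ (⊤ : ℕ∞) h₁)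
    (k₂ : ContDiff ℝ (⊤ : ℕ∞) h₂)
    (g₁ : fderiv ℝ h₁ (0, 0) = 0) (g₂ : fderiv ℝ h₂ (0, 0) = 0) {h : ℝ × ℝ → ℝ}
    (hns : rr h + tt h = 0) : traceHess h₁ h₂ h (0, 0) = 0 := by
  obtain ⟨⟨hE, hF, hG⟩, -⟩ := firstForm_origin k₁ k₂ g₁ g₂
  simpa [traceHess, hE, hF, hG, rr, tt] using hns

lemma hasFDerivAt_traceHess {h₁ h₂ : ℝ × ℝ → ℝ} (k₁ : ContDiff ℝ (⊤ : ℕ∞) h₁)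
    (k₂ : ContDiff ℝ (⊤ : ℕ∞) h₂)
    (g₁ : fderiv ℝ h₁ (0, 0) = 0) (g₂ : fderiv ℝ h₂ (0, 0) = 0) {h : ℝ × ℝ → ℝ}
    (k : ContDiff ℝ (⊤ : ℕ∞) h) :
    HasFDerivAt (traceHess h₁ h₂ h) (dLap h) (0, 0) := by
  obtain ⟨⟨hE, hF, hG⟩, dE, dF, dG⟩ := firstForm_origin k₁ k₂ g₁ g₂
  have d₁ := (differentiable_of_smooth (contDiff_pdu (contDiff_pdu k)) (0, 0)).hasFDerivAt
  have d₂ := (differentiable_of_smooth (contDiff_pdv (contDiff_pdu k)) (0, 0)).hasFDerivAt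
  have d₃ := (differentiable_of_smooth (contDiff_pdv (contDiff_pdv k)) (0, 0)).hasFDerivAt
  have := ((dG.fun_mul d₁).fun_sub ((dF.const_mul 2).fun_mul d₂)).fun_add (dE.fun_mul d₃)
  refine HasFDerivAt.congr_fderiv (f := traceHess h₁ h₂ h) this ?_
  simp [hE, hF, hG, dLap]

lemma meanAlong_origin {h₁ h₂ : ℝ × ℝ → ℝ} (k₁ : ContDiff ℝ (⊤ : ℕ∞) h₁)
    (k₂ : ContDiff ℝ (⊤ : ℕ∞) h₂)
    (g₁ : fderiv ℝ h₁ (0, 0) = 0) (g₂ : fderiv ℝ h₂ (0, 0) = 0)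
    (hns₁ : rr h₁ + tt h₁ = 0) (hns₂ : rr h₂ + tt h₂ = 0) (N : ℝ × ℝ → E4) :
    meanAlong h₁ h₂ N (0, 0) = 0 := by
  simp [meanAlong_eq k₁ k₂, traceHess_origin k₁ k₂ g₁ g₂ hns₁,
    traceHess_origin k₁ k₂ g₁ g₂ hns₂]

/-- At a normal singularity both `traceHess` factors in the numerator of `meanAlong` vanish at the
origin, so only the value of `N` there enters the differential, not its derivative. -/
lemma hasFDerivAt_meanAlong {h₁ h₂ : ℝ × ℝ → ℝ} (k₁ : ContDiff ℝ (⊤ : ℕ∞) h₁)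
    (k₂ : ContDiff ℝ (⊤ : ℕ∞) h₂)
    (g₁ : fderiv ℝ h₁ (0, 0) = 0) (g₂ : fderiv ℝ h₂ (0, 0) = 0)
    (hns₁ : rr h₁ + tt h₁ = 0) (hns₂ : rr h₂ + tt h₂ = 0) {N : ℝ × ℝ → E4}
    (hN : DifferentiableAt ℝ N (0, 0)) :
    HasFDerivAt (meanAlong h₁ h₂ N)
      ((2 : ℝ)⁻¹ • (N (0, 0) 2 • dLap h₁ + N (0, 0) 3 • dLap h₂)) (0, 0) := by
  obtain ⟨⟨hE, hF, hG⟩, dE, dF, dG⟩ := firstForm_origin k₁ k₂ g₁ g₂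
  have t₁ := traceHess_origin k₁ k₂ g₁ g₂ hns₁
  have t₂ := traceHess_origin k₁ k₂ g₁ g₂ hns₂
  rw [differentiableAt_euclidean] at hN
  have dnum := (hasFDerivAt_mul_of_zero (hasFDerivAt_traceHess k₁ k₂ g₁ g₂ k₁) (hN 2) t₁).fun_add
    (hasFDerivAt_mul_of_zero (hasFDerivAt_traceHess k₁ k₂ g₁ g₂ k₂) (hN 3) t₂)
  have dden : DifferentiableAt ℝ
      (fun p => (2 * (Ec h₁ h₂ p * Gc h₁ h₂ p - Fc h₁ h₂ p ^ 2))⁻¹) (0, 0) := by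
    refine DifferentiableAt.fun_inv ?_ (by simp [hE, hF, hG])
    exact ((dE.differentiableAt.fun_mul dG.differentiableAt).fun_sub
      (dF.differentiableAt.fun_pow 2)).const_mul 2
  rw [meanAlong_eq k₁ k₂]
  have := hasFDerivAt_mul_of_zero dnum dden (by simp [t₁, t₂])
  simpa [hE, hF, hG] using this

/-! ### The coefficient of `du²` -/

/-- `E ⟪α_uv, N⟫ - F ⟪α_uu, N⟫`, the coefficient of `du²` built from the second fundamental form
along `N`. -/
def duCoeff (h₁ h₂ : ℝ × ℝ → ℝ) (N : ℝ × ℝ → E4) (p : ℝ × ℝ) : ℝ :=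
  Ec h₁ h₂ p * ⟪αuv h₁ h₂ p, N p⟫ - Fc h₁ h₂ p * ⟪αuu h₁ h₂ p, N p⟫

lemma duCoeff_eq {h₁ h₂ : ℝ × ℝ → ℝ} (k₁ : ContDiff ℝ (⊤ : ℕ∞) h₁)
    (k₂ : ContDiff ℝ (⊤ : ℕ∞) h₂) (N : ℝ × ℝ → E4) :
    duCoeff h₁ h₂ N = fun p =>
      Ec h₁ h₂ p * (pdv (pdu h₁) p * N p 2 + pdv (pdu h₂) p * N p 3) -
        Fc h₁ h₂ p * (pdu (pdu h₁) p * N p 2 + pdu (pdu h₂) p * N p 3) := by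
  funext p
  simp [duCoeff, αuu_eq k₁ k₂, αuv_eq k₁ k₂, PiLp.inner_apply, Fin.sum_univ_four, mul_comm]

lemma duCoeff_origin {h₁ h₂ : ℝ × ℝ → ℝ} (k₁ : ContDiff ℝ (⊤ : ℕ∞) h₁)
    (k₂ : ContDiff ℝ (⊤ : ℕ∞) h₂)
    (g₁ : fderiv ℝ h₁ (0, 0) = 0) (g₂ : fderiv ℝ h₂ (0, 0) = 0) (N : ℝ × ℝ → E4) :
    duCoeff h₁ h₂ N (0, 0) = ss h₁ * N (0, 0) 2 + ss h₂ * N (0, 0) 3 := by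
  obtain ⟨⟨hE, hF, hG⟩, -⟩ := firstForm_origin k₁ k₂ g₁ g₂
  simp [duCoeff_eq k₁ k₂, hE, hF, ss]

lemma differentiableAt_duCoeff {h₁ h₂ : ℝ × ℝ → ℝ} (k₁ : ContDiff ℝ (⊤ : ℕ∞) h₁)
    (k₂ : ContDiff ℝ (⊤ : ℕ∞) h₂)
    (g₁ : fderiv ℝ h₁ (0, 0) = 0) (g₂ : fderiv ℝ h₂ (0, 0) = 0) {N : ℝ × ℝ → E4}
    (hN : DifferentiableAt ℝ N (0, 0)) : DifferentiableAt ℝ (duCoeff h₁ h₂ N) (0, 0) := by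
  obtain ⟨-, dE, dF, -⟩ := firstForm_origin k₁ k₂ g₁ g₂
  rw [differentiableAt_euclidean] at hN
  have d {h : ℝ × ℝ → ℝ} (k : ContDiff ℝ (⊤ : ℕ∞) h) := differentiable_of_smooth k (0, 0)
  rw [duCoeff_eq k₁ k₂]
  exact (dE.differentiableAt.fun_mul
      (((d (contDiff_pdv (contDiff_pdu k₁))).fun_mul (hN 2)).fun_add
        ((d (contDiff_pdv (contDiff_pdu k₂))).fun_mul (hN 3)))).fun_sub
    (dF.differentiableAt.fun_mul
      (((d (contDiff_pdu (contDiff_pdu k₁))).fun_mul (hN 2)).fun_add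
        ((d (contDiff_pdu (contDiff_pdu k₂))).fun_mul (hN 3))))

/-- at a normal singularity, the coefficient `C = E f_H − F e_H` of `du²`
in the differential equation of principal mean curvature lines vanishes at the origin and
has the stated first derivatives. -/
theorem stmt4
    (h₁ h₂ : ℝ × ℝ → ℝ)
    (h₁smooth : ContDiff ℝ (⊤ : ℕ∞) h₁) (h₂smooth : ContDiff ℝ (⊤ : ℕ∞) h₂)
    (h₁zero : h₁ (0, 0) = 0) (h₂zero : h₂ (0, 0) = 0)
    (h₁grad : fderiv ℝ h₁ (0, 0) = 0) (h₂grad : fderiv ℝ h₂ (0, 0) = 0)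
    (hns₁ : rr h₁ + tt h₁ = 0) (hns₂ : rr h₂ + tt h₂ = 0) :
    (fun p => Ec h₁ h₂ p * fH h₁ h₂ p - Fc h₁ h₂ p * eH h₁ h₂ p) (0, 0) = 0 ∧
    pdu (fun p => Ec h₁ h₂ p * fH h₁ h₂ p - Fc h₁ h₂ p * eH h₁ h₂ p) (0, 0) =
      (ss h₁ * (aa h₁ + bb h₁) + ss h₂ * (aa h₂ + bb h₂)) / 2 ∧
    pdv (fun p => Ec h₁ h₂ p * fH h₁ h₂ p - Fc h₁ h₂ p * eH h₁ h₂ p) (0, 0) =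
      (ss h₁ * (cc h₁ + dd h₁) + ss h₂ * (cc h₂ + dd h₂)) / 2 := by
  have hC : (fun p => Ec h₁ h₂ p * fH h₁ h₂ p - Fc h₁ h₂ p * eH h₁ h₂ p) = fun p =>
      meanAlong h₁ h₂ (N1 h₁) p * duCoeff h₁ h₂ (N1 h₁) p +
        meanAlong h₁ h₂ (N2 h₁ h₂) p * duCoeff h₁ h₂ (N2 h₁ h₂) p := by
    funext p
    change _ = Hc1 h₁ h₂ p * _ + Hc2 h₁ h₂ p * _
    -- `C` is linear in the normal field, through the second argument of the inner product.
    simp only [fH, eH, Hvec, inner_add_right, inner_smul_right, duCoeff]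
    ring
  rw [hC]
  have m := meanAlong_origin h₁smooth h₂smooth h₁grad h₂grad hns₁ hns₂
  have dN₁ := differentiableAt_N1 h₁smooth h₁grad
  have dN₂ := differentiableAt_N2 h₁smooth h₂smooth h₁grad h₂grad
  have dC := (hasFDerivAt_mul_of_zero
      (hasFDerivAt_meanAlong h₁smooth h₂smooth h₁grad h₂grad hns₁ hns₂ dN₁)
      (differentiableAt_duCoeff h₁smooth h₂smooth h₁grad h₂grad dN₁) (m _)).fun_add
    (hasFDerivAt_mul_of_zero
      (hasFDerivAt_meanAlong h₁smooth h₂smooth h₁grad h₂grad hns₁ hns₂ dN₂)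
      (differentiableAt_duCoeff h₁smooth h₂smooth h₁grad h₂grad dN₂) (m _))
  rw [duCoeff_origin h₁smooth h₂smooth h₁grad h₂grad,
    duCoeff_origin h₁smooth h₂smooth h₁grad h₂grad, N1_origin h₁grad,
    N2_origin h₁smooth h₂smooth h₁grad h₂grad] at dC
  have lapU {h : ℝ × ℝ → ℝ} (k : ContDiff ℝ (⊤ : ℕ∞) h) : dLap h (1, 0) = aa h + bb h := by
    have hb : pdu (pdv (pdv h)) = pdv (pdv (pdu h)) := by
      rw [pdu_pdv (contDiff_pdv k), pdu_pdv k]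
    rw [bb, ← hb]
    rfl
  have lapV (h : ℝ × ℝ → ℝ) : dLap h (0, 1) = cc h + dd h := add_comm _ _
  refine ⟨by simp [m], ?_, ?_⟩
  · rw [pdu, dC.fderiv]
    simp [lapU h₁smooth, lapU h₂smooth]
    ring
  · rw [pdv, dC.fderiv]
    simp [lapV]
    ring
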